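/- Let τ, σ ∈ ℂ satisfy Im τ > 0, Im σ > 0 and Im(σ/τ) > 0, and let z ∈ ℂ be such that all three elliptic gamma values below are defined (no denominator factor in the defining products vanishes). Then the three-term modular relation Γ(z/τ, σ/τ, −1/τ) = e^{iπ Q(z,τ,σ)} · Γ((z−τ)/σ, −τ/σ, −1/σ) · Γ(z, τ, σ) holds, where Q(z,τ,σ) = z³/(3τσ) − ((τ+σ−1)/(2τσ))·z² + ((τ² + σ² + 3τσ − 3τ − 3σ + 1)/(6τσ))·z + (1/12)·(τ+σ−1)·(1/τ + 1/σ − 1). -/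

import Mathlib

/-!
For fixed `τ, σ`, each elliptic gamma value is a quotient of two entire functions of `z`, namely of
double products `qPoch₂`. Clearing denominators turns the relation into an identity
`L z = e^{πiQ(z)} R z` between entire functions (`qPoch₂_three_term`).

Under `z ↦ z + τ` and `z ↦ z + σ` the double products change by simple products `qPoch`, which
combine into the theta functions `θ₀(z, σ)`, `θ₀(z/σ, −1/σ)` and `θ₀(z, τ)`, `θ₀(z/τ, −1/τ)`
respectively. The modular transformation of `θ₀` (`qTheta_modular`) and the increments of `Q` make
`L / (e^{πiQ} R)` doubly periodic with periods `τ, σ`. The function `R` has no zero on the closed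
parallelogram with corner `−1/2` spanned by `τ, σ`, so the quotient is constant by the maximum
modulus principle (`entire_quotient_const`). At `z = σ` the double products cancel, and the constant
is found to be `1` from the transformation of the Dedekind eta function (`qPoch_self_modular`).

The transformation of `θ₀` is obtained by the same method, with periods `1, τ`, the constant again
coming from the eta function.
-/

open Complex

/-- The theta function `θ₀(z,τ) = ∏_{j=0}^∞ (1 − e^{2πi((j+1)τ − z)})(1 − e^{2πi(jτ + z)})`. -/
noncomputable def theta0 (z τ : ℂ) : ℂ :=
  ∏' j : ℕ,
    (1 - Complex.exp (2 * Real.pi * Complex.I * ((j + 1) * τ - z))) *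
      (1 - Complex.exp (2 * Real.pi * Complex.I * (j * τ + z)))

/-- The elliptic gamma function
`Γ(z,τ,σ) = ∏_{j,k=0}^∞ (1 − e^{2πi((j+1)τ + (k+1)σ − z)}) / (1 − e^{2πi(jτ + kσ + z)})`. -/
noncomputable def ellGamma (z τ σ : ℂ) : ℂ :=
  ∏' p : ℕ × ℕ,
    (1 - Complex.exp (2 * Real.pi * Complex.I * ((p.1 + 1) * τ + (p.2 + 1) * σ - z))) /
      (1 - Complex.exp (2 * Real.pi * Complex.I * (p.1 * τ + p.2 * σ + z)))

/-- The condition that `jτ + kσ + z ∉ ℤ` for all natural numbers `j, k`. -/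
def EllGammaRegular (z τ σ : ℂ) : Prop :=
  ∀ j k : ℕ, ∀ n : ℤ, (j : ℂ) * τ + (k : ℂ) * σ + z ≠ (n : ℂ)

/-- The polynomial `Q(z,τ,σ)` appearing in the three-term modular relation. -/
noncomputable def modularQ (z τ σ : ℂ) : ℂ :=
  z ^ 3 / (3 * τ * σ) - (τ + σ - 1) / (2 * τ * σ) * z ^ 2 +
    (τ ^ 2 + σ ^ 2 + 3 * τ * σ - 3 * τ - 3 * σ + 1) / (6 * τ * σ) * z +
    (1 / 12) * (τ + σ - 1) * (1 / τ + 1 / σ - 1)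

section Auxiliary

open Filter Topology Set

/-! ### Entire functions with equal multipliers -/

/-- The identity theorem for entire functions. -/
lemma entire_eq_of_eventuallyEq {f g : ℂ → ℂ} (hf : Differentiable ℂ f) (hg : Differentiable ℂ g)
    {z : ℂ} (h : f =ᶠ[𝓝 z] g) : f = g :=
  AnalyticOnNhd.eq_of_eventuallyEq (fun w _ => hf.analyticAt w) (fun w _ => hg.analyticAt w) h

/-- A nonzero entire factor can be cancelled from an identity between entire functions. -/
lemma eq_of_mul_left_entire {f g h : ℂ → ℂ} (hf : Differentiable ℂ f) (hg : Differentiable ℂ g)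
    (hh : Differentiable ℂ h) {z : ℂ} (hz : h z ≠ 0) (H : ∀ w, h w * f w = h w * g w) : f = g := by
  refine entire_eq_of_eventuallyEq hf hg (z := z) ?_
  filter_upwards [hh.continuous.continuousAt.eventually_ne hz] with w hw
  exact mul_left_cancel₀ hw (H w)

/-- Liouville's theorem for the elliptic function `N / D`: if `N` and `D` are entire and transform
alike under translation by `ω₁` and `ω₂`, and `D` has no zero on one closed period parallelogram,
then `N / D` is constant. Near that parallelogram the values of `N / D` are values on it, so the
maximum of `‖N / D‖` over it is a local maximum in the plane, and the maximum modulus principle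
applies. -/
lemma entire_quotient_const {ω₁ ω₂ z₀ : ℂ} (hω₁ : ω₁ ≠ 0) (hω : (ω₂ / ω₁).im ≠ 0) {N D : ℂ → ℂ}
    (hN : Differentiable ℂ N) (hD : Differentiable ℂ D)
    (hK : ∀ a b : ℝ, a ∈ Icc (0 : ℝ) 1 → b ∈ Icc (0 : ℝ) 1 → D (z₀ + a * ω₁ + b * ω₂) ≠ 0)
    (h₁ : ∀ z, N (z + ω₁) * D z = N z * D (z + ω₁))
    (h₂ : ∀ z, N (z + ω₂) * D z = N z * D (z + ω₂)) :
    ∃ C : ℂ, ∀ z, N z = C * D z := by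
  set φ : ℝ × ℝ → ℂ := fun p => z₀ + p.1 * ω₁ + p.2 * ω₂ with hφ
  have hφc : Continuous φ := by fun_prop
  set f : ℂ → ℂ := fun z => N z / D z with hf
  have hK' : ∀ p ∈ (Icc 0 1 : Set ℝ) ×ˢ (Icc 0 1 : Set ℝ), D (φ p) ≠ 0 :=
    fun p hp => hK p.1 p.2 hp.1 hp.2
  have hcomp : IsCompact ((Icc 0 1 : Set ℝ) ×ˢ (Icc 0 1 : Set ℝ)) := isCompact_Icc.prod isCompact_Icc
  have hopen : IsOpen {p : ℝ × ℝ | D (φ p) ≠ 0} :=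
    isOpen_ne_fun (hD.continuous.comp hφc) continuous_const
  obtain ⟨δ, hδ, hsub⟩ := hcomp.exists_thickening_subset_open hopen hK'
  obtain ⟨ε, hε, hεδ, hε1⟩ : ∃ ε : ℝ, 0 < ε ∧ ε ≤ δ ∧ ε ≤ 1 / 2 :=
    ⟨min δ (1 / 2), by positivity, min_le_left _ _, min_le_right _ _⟩
  -- `D` has no zero on a parallelogram enlarged by `ε` on each side
  have hW : ∀ a b : ℝ, a ∈ Ioo (-ε) (1 + ε) → b ∈ Ioo (-ε) (1 + ε) → D (φ (a, b)) ≠ 0 := by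
    have clamp : ∀ a : ℝ, a ∈ Ioo (-ε) (1 + ε) → ∃ a' ∈ Icc (0 : ℝ) 1, dist a a' < δ := by
      intro a ha
      rcases lt_or_ge a 0 with h | h
      · refine ⟨0, by simp, ?_⟩
        rw [Real.dist_eq, abs_lt]; constructor <;> linarith [ha.1]
      rcases lt_or_ge 1 a with h' | h'
      · refine ⟨1, by simp, ?_⟩
        rw [Real.dist_eq, abs_lt]; constructor <;> linarith [ha.2]
      · exact ⟨a, ⟨h, h'⟩, by simpa using hδ⟩
    intro a b ha hb
    obtain ⟨a', ha', hda⟩ := clamp a ha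
    obtain ⟨b', hb', hdb⟩ := clamp b hb
    refine hsub (Metric.mem_thickening_iff.2 ⟨(a', b'), ⟨ha', hb'⟩, ?_⟩)
    rw [Prod.dist_eq]; exact max_lt hda hdb
  -- the periodicity of the quotient wherever both values are defined
  have per₁ : ∀ z, D z ≠ 0 → D (z + ω₁) ≠ 0 → f (z + ω₁) = f z := by
    intro z h h'
    simp only [hf]; rw [div_eq_div_iff h' h, h₁ z]
  have per₂ : ∀ z, D z ≠ 0 → D (z + ω₂) ≠ 0 → f (z + ω₂) = f z := by
    intro z h h'
    simp only [hf]; rw [div_eq_div_iff h' h, h₂ z]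
  have shift₁ : ∀ a b : ℝ, φ (a + 1, b) = φ (a, b) + ω₁ := by
    intro a b; simp only [hφ]; push_cast; ring
  have shift₂ : ∀ a b : ℝ, φ (a, b + 1) = φ (a, b) + ω₂ := by
    intro a b; simp only [hφ]; push_cast; ring
  have red₁ : ∀ a b : ℝ, a ∈ Ioo (-ε) (1 + ε) → b ∈ Ioo (-ε) (1 + ε) →
      ∃ a' ∈ Icc (0 : ℝ) 1, f (φ (a, b)) = f (φ (a', b)) := by
    intro a b ha hb
    rcases lt_or_ge a 0 with h | h
    · refine ⟨a + 1, ⟨by linarith [ha.1], by linarith⟩, ?_⟩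
      have h' := hW (a + 1) b ⟨by linarith [ha.1], by linarith⟩ hb
      rw [shift₁] at h' ⊢
      exact (per₁ _ (hW a b ha hb) h').symm
    rcases lt_or_ge 1 a with h' | h'
    · refine ⟨a - 1, ⟨by linarith [ha.1], by linarith [ha.2]⟩, ?_⟩
      have h1 := hW (a - 1) b ⟨by linarith [ha.1], by linarith [ha.2]⟩ hb
      have h2 := shift₁ (a - 1) b
      rw [sub_add_cancel] at h2
      have h3 := hW a b ha hb
      rw [h2] at h3 ⊢
      exact per₁ _ h1 h3
    · exact ⟨a, ⟨h, h'⟩, rfl⟩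
  have red₂ : ∀ a b : ℝ, a ∈ Icc (0 : ℝ) 1 → b ∈ Ioo (-ε) (1 + ε) →
      ∃ b' ∈ Icc (0 : ℝ) 1, f (φ (a, b)) = f (φ (a, b')) := by
    intro a b ha' hb
    have ha : a ∈ Ioo (-ε) (1 + ε) := ⟨by linarith [ha'.1], by linarith [ha'.2]⟩
    rcases lt_or_ge b 0 with h | h
    · refine ⟨b + 1, ⟨by linarith [hb.1], by linarith⟩, ?_⟩
      have h' := hW a (b + 1) ha ⟨by linarith [hb.1], by linarith⟩
      rw [shift₂] at h' ⊢
      exact (per₂ _ (hW a b ha hb) h').symm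
    rcases lt_or_ge 1 b with h' | h'
    · refine ⟨b - 1, ⟨by linarith [hb.1], by linarith [hb.2]⟩, ?_⟩
      have h1 := hW a (b - 1) ha ⟨by linarith [hb.1], by linarith [hb.2]⟩
      have h2 := shift₂ a (b - 1)
      rw [sub_add_cancel] at h2
      have h3 := hW a b ha hb
      rw [h2] at h3 ⊢
      exact per₂ _ h1 h3
    · exact ⟨b, ⟨h, h'⟩, rfl⟩
  -- a point of the closed parallelogram at which `‖f‖` is maximal
  have hfc : ContinuousOn (fun p => ‖f (φ p)‖) ((Icc 0 1 : Set ℝ) ×ˢ (Icc 0 1 : Set ℝ)) :=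
    (((hN.continuous.comp hφc).continuousOn).div ((hD.continuous.comp hφc).continuousOn) hK').norm
  obtain ⟨p, hp, hmax⟩ := hcomp.exists_isMaxOn ⟨(0, 0), by simp⟩ hfc
  -- real coordinates with respect to `ω₁, ω₂`
  set B : ℂ → ℝ := fun w => ((w - z₀) / ω₁).im / (ω₂ / ω₁).im with hB
  set A : ℂ → ℝ := fun w => ((w - z₀) / ω₁).re - B w * (ω₂ / ω₁).re with hA
  have hBc : Continuous B := by fun_prop
  have hAc : Continuous A := by fun_prop
  have hAB : ∀ w, φ (A w, B w) = w := by
    intro w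
    have : (w - z₀) / ω₁ = A w + B w * (ω₂ / ω₁) := by
      apply Complex.ext
      · simp [hA]
      · simp only [add_im, ofReal_im, im_ofReal_mul, zero_add, hB]
        rw [div_mul_cancel₀ _ hω]
    simp only [hφ]
    field_simp at this
    linear_combination -this
  have hx : (φ p - z₀) / ω₁ = p.1 + p.2 * (ω₂ / ω₁) := by
    simp only [hφ]; field_simp; ring
  have hBp : B (φ p) = p.2 := by
    simp only [hB, hx, add_im, ofReal_im, im_ofReal_mul, zero_add]
    rw [mul_div_cancel_right₀ _ hω]
  have hAp : A (φ p) = p.1 := by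
    simp only [hA, hx, hBp, add_re, ofReal_re, re_ofReal_mul]; ring
  have hIoo : ∀ x ∈ Icc (0 : ℝ) 1, Ioo (-ε) (1 + ε) ∈ 𝓝 x := fun x hx =>
    Ioo_mem_nhds (by linarith [hx.1]) (by linarith [hx.2])
  have hloc : IsLocalMax (norm ∘ f) (φ p) := by
    have e1 : ∀ᶠ w in 𝓝 (φ p), A w ∈ Ioo (-ε) (1 + ε) :=
      hAc.continuousAt (by rw [hAp]; exact hIoo _ hp.1)
    have e2 : ∀ᶠ w in 𝓝 (φ p), B w ∈ Ioo (-ε) (1 + ε) :=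
      hBc.continuousAt (by rw [hBp]; exact hIoo _ hp.2)
    filter_upwards [e1, e2] with w hw1 hw2
    obtain ⟨a', ha', h1⟩ := red₁ _ _ hw1 hw2
    obtain ⟨b', hb', h2⟩ := red₂ _ _ ha' hw2
    rw [hAB, h2] at h1
    simp only [Function.comp_apply, h1]
    exact hmax (show (a', b') ∈ _ from ⟨ha', hb'⟩)
  have hne : ∀ᶠ w in 𝓝 (φ p), D w ≠ 0 := hD.continuous.continuousAt.eventually_ne (hK' p hp)
  have hconst : ∀ᶠ w in 𝓝 (φ p), f w = f (φ p) := by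
    refine Complex.eventually_eq_of_isLocalMax_norm ?_ hloc
    filter_upwards [hne] with w hw
    exact (hN w).div (hD w) hw
  refine ⟨f (φ p), fun z => ?_⟩
  refine congrFun (entire_eq_of_eventuallyEq hN (g := fun z => f (φ p) * D z)
    (hD.const_mul _) (z := φ p) ?_) z
  filter_upwards [hconst, hne] with w hw hw'
  rw [← hw]; simp only [hf]; rw [div_mul_cancel₀ _ hw']

/-! ### Simple and double infinite products -/

/-- `(x; q)_∞ = ∏_{j ≥ 0} (1 − q^j x)` for `q = e^{2πiτ}`, `x = e^{2πiz}`. -/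
noncomputable def qPoch (z τ : ℂ) : ℂ :=
  ∏' j : ℕ, (1 - exp (2 * Real.pi * I * (j * τ + z)))

/-- The double product `∏_{j,k ≥ 0} (1 − e^{2πi(jτ + kσ + z)})`. -/
noncomputable def qPoch₂ (z τ σ : ℂ) : ℂ :=
  ∏' p : ℕ × ℕ, (1 - exp (2 * Real.pi * I * (p.1 * τ + p.2 * σ + z)))

/-- The product is entire in `x`; the functions `qPoch` and `qPoch₂` arise with `x = e^{2πiz}`. -/
lemma differentiable_tprod_one_sub {ι : Type*} {u : ι → ℂ} (hu : Summable fun i => ‖u i‖) :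
    Differentiable ℂ fun x : ℂ => ∏' i, (1 - u i * x) := by
  intro x
  set r := ‖x‖ + 1
  have hopen : IsOpen (Metric.ball (0 : ℂ) r) := Metric.isOpen_ball
  have H := Summable.hasProdLocallyUniformlyOn_one_add (f := fun i (x : ℂ) => -(u i * x))
    (K := Metric.ball (0 : ℂ) r) hopen (hu.mul_right r)
    (Eventually.of_forall fun i x hx => by
      rw [norm_neg, norm_mul]
      gcongr
      simpa using (mem_ball_zero_iff.1 hx).le) (fun i => by fun_prop)
  have H2 := TendstoLocallyUniformlyOn.differentiableOn H
    (Eventually.of_forall fun s => by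
      apply DifferentiableOn.fun_finsetProd
      intro i _; fun_prop) hopen
  have := H2.differentiableAt (hopen.mem_nhds (by simp [r] : x ∈ Metric.ball (0 : ℂ) r))
  simpa [sub_eq_add_neg] using this

lemma norm_exp_two_pi_I_mul (w : ℂ) : ‖exp (2 * Real.pi * I * w)‖ = Real.exp (-2 * Real.pi * w.im) := by
  rw [Complex.norm_exp]; congr 1; simp

lemma exp_two_pi_I_mul_eq_one_iff (w : ℂ) : exp (2 * Real.pi * I * w) = 1 ↔ ∃ n : ℤ, w = n := by
  rw [Complex.exp_eq_one_iff]
  refine exists_congr fun n => ?_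
  rw [mul_comm (n : ℂ), mul_right_inj' Complex.two_pi_I_ne_zero]

lemma summable_qPoch (z : ℂ) {τ : ℂ} (hτ : 0 < τ.im) :
    Summable fun j : ℕ => ‖exp (2 * Real.pi * I * (j * τ + z))‖ := by
  have : Summable fun j : ℕ => Real.exp (-2 * Real.pi * τ.im) ^ j * Real.exp (-2 * Real.pi * z.im) := by
    refine (summable_geometric_of_lt_one (Real.exp_pos _).le ?_).mul_right _
    rw [Real.exp_lt_one_iff]
    nlinarith [Real.pi_pos, mul_pos Real.pi_pos hτ]
  refine this.congr fun j => ?_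
  rw [norm_exp_two_pi_I_mul, ← Real.exp_nat_mul, ← Real.exp_add]
  congr 1; simp; ring

lemma summable_qPoch₂ (z : ℂ) {τ σ : ℂ} (hτ : 0 < τ.im) (hσ : 0 < σ.im) :
    Summable fun p : ℕ × ℕ => ‖exp (2 * Real.pi * I * (p.1 * τ + p.2 * σ + z))‖ := by
  refine ((summable_qPoch 0 hτ).mul_of_nonneg (summable_qPoch z hσ) (fun _ => norm_nonneg _)
    (fun _ => norm_nonneg _)).congr fun p => ?_
  rw [← norm_mul, ← Complex.exp_add]
  congr 2; ring

lemma multipliable_qPoch (z : ℂ) {τ : ℂ} (hτ : 0 < τ.im) :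
    Multipliable fun j : ℕ => 1 - exp (2 * Real.pi * I * (j * τ + z)) := by
  simpa [sub_eq_add_neg] using multipliable_one_add_of_summable
    (f := fun j : ℕ => -exp (2 * Real.pi * I * (j * τ + z))) (by simpa using summable_qPoch z hτ)

lemma multipliable_qPoch₂ (z : ℂ) {τ σ : ℂ} (hτ : 0 < τ.im) (hσ : 0 < σ.im) :
    Multipliable fun p : ℕ × ℕ => 1 - exp (2 * Real.pi * I * (p.1 * τ + p.2 * σ + z)) := by
  simpa [sub_eq_add_neg] using multipliable_one_add_of_summable
    (f := fun p : ℕ × ℕ => -exp (2 * Real.pi * I * (p.1 * τ + p.2 * σ + z)))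
    (by simpa using summable_qPoch₂ z hτ hσ)

lemma hasProd_qPoch (z : ℂ) {τ : ℂ} (hτ : 0 < τ.im) :
    HasProd (fun j : ℕ => 1 - exp (2 * Real.pi * I * (j * τ + z))) (qPoch z τ) :=
  (multipliable_qPoch z hτ).hasProd

lemma hasProd_qPoch₂_pair (z : ℂ) {τ σ : ℂ} (hτ : 0 < τ.im) (hσ : 0 < σ.im) :
    HasProd (fun p : ℕ × ℕ => 1 - exp (2 * Real.pi * I * (p.1 * τ + p.2 * σ + z)))
      (qPoch₂ z τ σ) :=
  (multipliable_qPoch₂ z hτ hσ).hasProd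

lemma qPoch_ne_zero {z τ : ℂ} (hτ : 0 < τ.im) (h : ∀ (j : ℕ) (n : ℤ), (j : ℂ) * τ + z ≠ n) :
    qPoch z τ ≠ 0 := by
  have := tprod_one_add_ne_zero_of_summable
    (f := fun j : ℕ => -exp (2 * Real.pi * I * (j * τ + z))) (fun j => ?_)
    (by simpa using summable_qPoch z hτ)
  · simpa [qPoch, sub_eq_add_neg] using this
  · rw [← sub_eq_add_neg, sub_ne_zero]
    intro h1
    obtain ⟨n, hn⟩ := (exp_two_pi_I_mul_eq_one_iff _).1 h1.symm
    exact h j n hn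

lemma qPoch₂_ne_zero {z τ σ : ℂ} (hτ : 0 < τ.im) (hσ : 0 < σ.im) (h : EllGammaRegular z τ σ) :
    qPoch₂ z τ σ ≠ 0 := by
  have := tprod_one_add_ne_zero_of_summable
    (f := fun p : ℕ × ℕ => -exp (2 * Real.pi * I * (p.1 * τ + p.2 * σ + z))) (fun p => ?_)
    (by simpa using summable_qPoch₂ z hτ hσ)
  · simpa [qPoch₂, sub_eq_add_neg] using this
  · rw [← sub_eq_add_neg, sub_ne_zero]
    intro h1
    obtain ⟨n, hn⟩ := (exp_two_pi_I_mul_eq_one_iff _).1 h1.symm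
    exact h p.1 p.2 n hn

lemma qPoch_ne_zero_of_im_pos {z τ : ℂ} (hτ : 0 < τ.im) (hz : 0 < z.im) : qPoch z τ ≠ 0 := by
  refine qPoch_ne_zero hτ fun j n h => ?_
  have := congrArg Complex.im h
  simp at this
  have : 0 ≤ (j : ℝ) * τ.im := by positivity
  linarith

lemma qPoch₂_ne_zero_of_im_nonneg {z τ σ : ℂ} (hτ : 0 < τ.im) (hσ : 0 < σ.im) (hz : 0 ≤ z.im)
    (hz' : z.im = 0 → ∀ n : ℤ, z ≠ n) : qPoch₂ z τ σ ≠ 0 := by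
  refine qPoch₂_ne_zero hτ hσ fun j k n h => ?_
  have h0 := congrArg Complex.im h
  simp at h0
  have hj : 0 ≤ (j : ℝ) * τ.im := by positivity
  have hk : 0 ≤ (k : ℝ) * σ.im := by positivity
  have hj0 : (j : ℝ) * τ.im = 0 := by linarith
  have hk0 : (k : ℝ) * σ.im = 0 := by linarith
  have hj1 : j = 0 := by simpa [hτ.ne'] using hj0
  have hk1 : k = 0 := by simpa [hσ.ne'] using hk0
  subst hj1 hk1
  exact hz' (by linarith) n (by simpa using h)

lemma qPoch₂_ne_zero_of_im_pos {z τ σ : ℂ} (hτ : 0 < τ.im) (hσ : 0 < σ.im) (hz : 0 < z.im) :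
    qPoch₂ z τ σ ≠ 0 :=
  qPoch₂_ne_zero_of_im_nonneg hτ hσ hz.le fun h => absurd h hz.ne'

lemma differentiable_qPoch {τ : ℂ} (hτ : 0 < τ.im) : Differentiable ℂ fun z => qPoch z τ := by
  have h := (differentiable_tprod_one_sub (summable_qPoch 0 hτ)).comp
    (show Differentiable ℂ fun z : ℂ => exp (2 * Real.pi * I * z) by fun_prop)
  refine cast (congrArg _ (funext fun z => tprod_congr fun j => ?_)) h
  rw [← Complex.exp_add, ← mul_add, add_zero]

lemma differentiable_qPoch₂ {τ σ : ℂ} (hτ : 0 < τ.im) (hσ : 0 < σ.im) :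
    Differentiable ℂ fun z => qPoch₂ z τ σ := by
  have h := (differentiable_tprod_one_sub (summable_qPoch₂ 0 hτ hσ)).comp
    (show Differentiable ℂ fun z : ℂ => exp (2 * Real.pi * I * z) by fun_prop)
  refine cast (congrArg _ (funext fun z => tprod_congr fun j => ?_)) h
  rw [← Complex.exp_add, ← mul_add, add_zero]

lemma exp_two_pi_I_mul_add_one (w : ℂ) :
    exp (2 * Real.pi * I * (w + 1)) = exp (2 * Real.pi * I * w) := by
  rw [mul_add, mul_one, Complex.exp_add, Complex.exp_two_pi_mul_I, mul_one]

lemma qPoch_add_one (z τ : ℂ) : qPoch (z + 1) τ = qPoch z τ := by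
  refine tprod_congr fun j => ?_
  rw [← add_assoc, exp_two_pi_I_mul_add_one]

lemma qPoch₂_add_one (z τ σ : ℂ) : qPoch₂ (z + 1) τ σ = qPoch₂ z τ σ := by
  refine tprod_congr fun j => ?_
  rw [← add_assoc, exp_two_pi_I_mul_add_one]

lemma qPoch_sub_one (z τ : ℂ) : qPoch (z - 1) τ = qPoch z τ := by
  rw [← qPoch_add_one (z - 1), sub_add_cancel]

lemma qPoch₂_sub_one (z τ σ : ℂ) : qPoch₂ (z - 1) τ σ = qPoch₂ z τ σ := by
  rw [← qPoch₂_add_one (z - 1), sub_add_cancel]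

lemma qPoch_eq_mul (z : ℂ) {τ : ℂ} (hτ : 0 < τ.im) :
    qPoch z τ = (1 - exp (2 * Real.pi * I * z)) * qPoch (z + τ) τ := by
  have h := hasProd_qPoch (z + τ) hτ
  have h2 : HasProd (fun j : ℕ => 1 - exp (2 * Real.pi * I * ((j + 1 : ℕ) * τ + z)))
      (qPoch (z + τ) τ) := by
    convert h using 5 with j
    push_cast; ring
  simpa [qPoch] using (h2.zero_mul (f := fun j : ℕ => 1 - exp (2 * Real.pi * I * (j * τ + z)))).tprod_eq

lemma hasProd_qPoch₂ (z : ℂ) {τ σ : ℂ} (hτ : 0 < τ.im) (hσ : 0 < σ.im) :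
    HasProd (fun j : ℕ => qPoch (j * τ + z) σ) (qPoch₂ z τ σ) := by
  refine (multipliable_qPoch₂ z hτ hσ).hasProd.prod_fiberwise fun j => ?_
  convert hasProd_qPoch (j * τ + z) hσ using 5
  ring

lemma qPoch₂_eq_mul (z : ℂ) {τ σ : ℂ} (hτ : 0 < τ.im) (hσ : 0 < σ.im) :
    qPoch₂ z τ σ = qPoch z σ * qPoch₂ (z + τ) τ σ := by
  have h2 : HasProd (fun j : ℕ => qPoch ((j + 1 : ℕ) * τ + z) σ) (qPoch₂ (z + τ) τ σ) := by
    convert hasProd_qPoch₂ (z + τ) hτ hσ using 3 with j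
    push_cast; ring
  have := (h2.zero_mul (f := fun j : ℕ => qPoch (j * τ + z) σ)).unique (hasProd_qPoch₂ z hτ hσ)
  simpa using this.symm

lemma qPoch₂_comm (z τ σ : ℂ) : qPoch₂ z τ σ = qPoch₂ z σ τ := by
  unfold qPoch₂
  rw [← (Equiv.prodComm ℕ ℕ).tprod_eq]
  refine tprod_congr fun p => ?_
  simp only [Equiv.prodComm_apply, Prod.fst_swap, Prod.snd_swap]
  ring_nf

lemma qPoch₂_eq_mul' (z : ℂ) {τ σ : ℂ} (hτ : 0 < τ.im) (hσ : 0 < σ.im) :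
    qPoch₂ z τ σ = qPoch z τ * qPoch₂ (z + σ) τ σ := by
  rw [qPoch₂_comm, qPoch₂_eq_mul z hσ hτ, qPoch₂_comm]

/-- For regular arguments the product of quotients is the quotient of two convergent products. -/
lemma ellGamma_eq_div {z τ σ : ℂ} (hτ : 0 < τ.im) (hσ : 0 < σ.im) (h : EllGammaRegular z τ σ) :
    ellGamma z τ σ = qPoch₂ (τ + σ - z) τ σ / qPoch₂ z τ σ := by
  have h1 := hasProd_qPoch₂_pair (τ + σ - z) hτ hσ
  have h2 := (hasProd_qPoch₂_pair z hτ hσ).inv₀ (qPoch₂_ne_zero hτ hσ h)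
  rw [div_eq_mul_inv]
  refine HasProd.tprod_eq ?_
  convert h1.mul h2 using 2 with p
  rw [div_eq_mul_inv]; congr 4; ring

/-! ### Modular transformations of the eta and theta functions -/

lemma neg_one_div_im_pos {τ : ℂ} (hτ : 0 < τ.im) : 0 < (-1 / τ).im := by
  have hne : τ ≠ 0 := fun h => by simp [h] at hτ
  rw [neg_div, one_div, neg_im, inv_im, neg_div, neg_neg]
  exact div_pos hτ (normSq_pos.2 hne)

lemma eta_eq_qPoch (τ : ℂ) :
    ModularForm.eta τ = exp (2 * Real.pi * I * (τ / 24)) * qPoch τ τ := by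
  unfold ModularForm.eta qPoch
  congr 1
  · simp only [Function.Periodic.qParam]
    congr 1; push_cast; ring
  · refine tprod_congr fun n => ?_
    rw [ModularForm.eta_q_eq_cexp]
    congr 2; ring

/-- The Dedekind transformation formula, written for `(q; q)_∞`. -/
lemma qPoch_self_modular {τ : ℂ} (hτ : 0 < τ.im) :
    sqrt I * qPoch (-1 / τ) (-1 / τ) =
      exp (2 * Real.pi * I * ((τ + 1 / τ) / 24)) * sqrt τ * qPoch τ τ := by
  have h := ModularForm.eta_comp_eq_csqrt_I_inv (show τ ∈ UpperHalfPlane.upperHalfPlaneSet from hτ)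
  simp only [Function.comp_apply, Pi.smul_apply, Pi.mul_apply, smul_eq_mul, eta_eq_qPoch] at h
  have hI : sqrt I ≠ 0 := by simp [sqrt]
  rw [eq_inv_mul_iff_mul_eq₀ hI] at h
  have e1 : exp (2 * Real.pi * I * ((τ + 1 / τ) / 24)) =
      exp (2 * Real.pi * I * (τ / 24)) * exp (-(2 * Real.pi * I * (-1 / τ / 24))) := by
    rw [← Complex.exp_add]; congr 1; ring
  rw [e1, Complex.exp_neg]
  have hne := Complex.exp_ne_zero (2 * Real.pi * I * (-1 / τ / 24))
  generalize exp (2 * Real.pi * I * (-1 / τ / 24)) = E₁ at h hne ⊢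
  generalize exp (2 * Real.pi * I * (τ / 24)) = E₂ at h ⊢
  refine mul_left_cancel₀ hne ?_
  rw [show E₁ * (E₂ * E₁⁻¹ * sqrt τ * qPoch τ τ) = E₁ * E₁⁻¹ * (E₂ * sqrt τ * qPoch τ τ) by ring,
    mul_inv_cancel₀ hne]
  linear_combination h

lemma sqrt_sq' {z : ℂ} (hz : z ≠ 0) : sqrt z * sqrt z = z := by
  rw [sqrt_eq_exp hz, ← Complex.exp_add, add_halves, exp_log hz]

/-- The arguments of `τ` and `σ` lie in `(0, π)`, so `arg (σ / τ) = arg σ - arg τ` without a branch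
correction. -/
lemma sqrt_mul_sqrt_div {τ σ : ℂ} (hτ : 0 < τ.im) (hσ : 0 < σ.im) :
    sqrt τ * sqrt (σ / τ) = sqrt σ := by
  have hτ0 : τ ≠ 0 := fun h => by simp [h] at hτ
  have hσ0 : σ ≠ 0 := fun h => by simp [h] at hσ
  have a1 : 0 < arg τ ∧ arg τ < Real.pi :=
    ⟨(arg_nonneg_iff.2 hτ.le).lt_of_ne fun h => hτ.ne' (arg_eq_zero_iff.1 h.symm).2,
      arg_lt_pi_iff.2 (Or.inr hτ.ne')⟩
  have a2 : 0 < arg σ ∧ arg σ < Real.pi :=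
    ⟨(arg_nonneg_iff.2 hσ.le).lt_of_ne fun h => hσ.ne' (arg_eq_zero_iff.1 h.symm).2,
      arg_lt_pi_iff.2 (Or.inr hσ.ne')⟩
  have hl : log (σ / τ) = log σ - log τ := by
    rw [div_eq_mul_inv, Complex.log_mul hσ0 (inv_ne_zero hτ0), Complex.log_inv _ a1.2.ne]
    · ring
    · rw [Complex.arg_inv, if_neg a1.2.ne]
      constructor <;> linarith [a1.1, a1.2, a2.1, a2.2]
  rw [sqrt_eq_exp hτ0, sqrt_eq_exp (div_ne_zero hσ0 hτ0), sqrt_eq_exp hσ0, ← Complex.exp_add, hl]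
  congr 1; ring

/-- The theta function `θ₀(z, τ)` as a product of two `q`-Pochhammer symbols. -/
noncomputable def qTheta (z τ : ℂ) : ℂ := qPoch (τ - z) τ * qPoch z τ

/-- The exponent in the modular transformation of `θ₀`. -/
noncomputable def thetaB (z τ : ℂ) : ℂ := z ^ 2 / τ + z * (1 / τ - 1) + (τ + 1 / τ) / 6 - 1 / 2

/-- The entire function `w ↦ (1 − e^{2πiw}) / w`. -/
noncomputable def expQuot : ℂ → ℂ := dslope (fun w => 1 - exp (2 * Real.pi * I * w)) 0

lemma mul_expQuot (w : ℂ) : w * expQuot w = 1 - exp (2 * Real.pi * I * w) := by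
  simpa [expQuot] using sub_smul_dslope (fun w => 1 - exp (2 * Real.pi * I * w)) 0 w

lemma differentiable_expQuot : Differentiable ℂ expQuot := by
  have h := (Complex.differentiableOn_dslope (f := fun w => 1 - exp (2 * Real.pi * I * w))
    (c := 0) (s := univ) univ_mem).2 (by fun_prop)
  exact differentiableOn_univ.1 h

lemma expQuot_zero_ne : expQuot 0 ≠ 0 := by
  have h : HasDerivAt (fun w : ℂ => 1 - exp (2 * Real.pi * I * w)) (-(2 * Real.pi * I)) 0 := by
    have := (((hasDerivAt_id (0 : ℂ)).const_mul (2 * Real.pi * I)).cexp).const_sub 1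
    simpa using this
  rw [expQuot, dslope_same, h.deriv]
  simp

lemma qTheta_add_one (z τ : ℂ) : qTheta (z + 1) τ = qTheta z τ := by
  unfold qTheta
  rw [qPoch_add_one, ← sub_sub, qPoch_sub_one]

lemma qTheta_eq_neg_exp_mul (z : ℂ) {τ : ℂ} (hτ : 0 < τ.im) :
    qTheta z τ = -exp (2 * Real.pi * I * z) * qTheta (z + τ) τ := by
  unfold qTheta
  have h1 := qPoch_eq_mul z hτ
  have h2 := qPoch_eq_mul (-z) hτ
  rw [show -z + τ = τ - z by ring] at h2
  rw [show τ - (z + τ) = -z by ring, h1, h2, mul_neg, Complex.exp_neg]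
  have := Complex.exp_ne_zero (2 * Real.pi * I * z)
  field_simp
  ring

lemma differentiable_qTheta {τ : ℂ} (hτ : 0 < τ.im) : Differentiable ℂ fun z => qTheta z τ :=
  ((differentiable_qPoch hτ).comp ((differentiable_const τ).sub differentiable_id)).mul
    (differentiable_qPoch hτ)

/-- The modular transformation of `θ₀`. Both sides have simple zeros on `ℤ + ℤτ`; divided by `z`
they are entire with no zero at `0`, and their quotient is elliptic, hence constant. -/
theorem qTheta_modular (z : ℂ) {τ : ℂ} (hτ : 0 < τ.im) :
    qTheta (z / τ) (-1 / τ) = exp (Real.pi * I * thetaB z τ) * qTheta z τ := by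
  have hτ0 : τ ≠ 0 := fun h => by simp [h] at hτ
  set s : ℂ := -1 / τ with hs
  have hsim : 0 < s.im := neg_one_div_im_pos hτ
  -- `t(z, τ) = θ₀(z, τ) / (1 − e^{2πiz})`, which does not vanish for `|Im z| < Im τ`
  set t : ℂ → ℂ → ℂ := fun z τ => qPoch (τ - z) τ * qPoch (z + τ) τ with ht
  have htd : ∀ {τ : ℂ}, 0 < τ.im → Differentiable ℂ fun z => t z τ := fun {τ} hτ =>
    ((differentiable_qPoch hτ).comp ((differentiable_const τ).sub differentiable_id)).mul
      ((differentiable_qPoch hτ).comp (differentiable_id.add (differentiable_const τ)))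
  have hth : ∀ (z : ℂ) {τ : ℂ}, 0 < τ.im → qTheta z τ = z * expQuot z * t z τ := by
    intro z τ hτ
    simp only [qTheta, ht]
    rw [qPoch_eq_mul z hτ, mul_expQuot]; ring
  have hdB : Differentiable ℂ fun z => exp (Real.pi * I * thetaB z τ) := by
    unfold thetaB; fun_prop
  set N : ℂ → ℂ := fun z => expQuot (z / τ) * t (z / τ) s with hN
  set D : ℂ → ℂ := fun z => τ * expQuot z * t z τ * exp (Real.pi * I * thetaB z τ) with hD
  have hzN : ∀ z, z * N z = τ * qTheta (z / τ) s := by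
    intro z
    rw [hth _ hsim]; simp only [hN]; field_simp
  have hzD : ∀ z, z * D z = τ * (exp (Real.pi * I * thetaB z τ) * qTheta z τ) := by
    intro z
    rw [hth _ hτ]; simp only [hD]; ring
  have hNd : Differentiable ℂ N :=
    (differentiable_expQuot.comp (differentiable_id.div_const τ)).mul
      ((htd hsim).comp (differentiable_id.div_const τ))
  have hDd : Differentiable ℂ D := (((differentiable_expQuot.const_mul τ)).mul (htd hτ)).mul hdB
  -- an identity holding after multiplication by `z * (z + ω)` holds for entire functions
  have key : ∀ ω : ℂ, ω ≠ 0 →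
      (∀ z, ((z + ω) * N (z + ω)) * (z * D z) = (z * N z) * ((z + ω) * D (z + ω))) →
      ∀ z, N (z + ω) * D z = N z * D (z + ω) := by
    intro ω hω H
    have sh : Differentiable ℂ fun z : ℂ => z + ω := by fun_prop
    refine congrFun (eq_of_mul_left_entire (f := fun z => N (z + ω) * D z)
      (g := fun z => N z * D (z + ω)) (h := fun z => z * (z + ω)) ((hNd.comp sh).mul hDd)
      (hNd.mul (hDd.comp sh)) (by fun_prop) (z := ω) ?_ fun w => ?_)
    · simp [hω]
    · linear_combination H w
  have per₁ := key 1 one_ne_zero fun z => by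
    rw [hzN, hzN, hzD, hzD, qTheta_add_one]
    have h := qTheta_eq_neg_exp_mul ((z + 1) / τ) hsim
    rw [show (z + 1) / τ + s = z / τ by rw [hs]; ring] at h
    have e : exp (Real.pi * I * thetaB (z + 1) τ) =
        exp (Real.pi * I * thetaB z τ) * (-exp (2 * Real.pi * I * ((z + 1) / τ))) := by
      rw [← neg_one_mul, ← Complex.exp_neg_pi_mul_I, ← Complex.exp_add, ← Complex.exp_add]
      congr 1; unfold thetaB; ring
    rw [h, e]; ring
  have per₂ := key τ hτ0 fun z => by
    rw [hzN, hzN, hzD, hzD, add_div, div_self hτ0, qTheta_add_one]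
    have h := qTheta_eq_neg_exp_mul z hτ
    have e : exp (Real.pi * I * thetaB (z + τ) τ) =
        exp (Real.pi * I * thetaB z τ) * (-exp (2 * Real.pi * I * z)) := by
      rw [← neg_one_mul, ← Complex.exp_pi_mul_I, ← Complex.exp_add, ← Complex.exp_add]
      congr 1; unfold thetaB; field_simp; ring
    rw [h, e]; ring
  obtain ⟨C, hC⟩ := entire_quotient_const (ω₁ := 1) (ω₂ := τ) (z₀ := -1 / 2 - τ / 2) one_ne_zero
    (by simpa using hτ.ne') hNd hDd (by
      intro a b ha hb
      set w : ℂ := -1 / 2 - τ / 2 + a * 1 + b * τ with hw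
      have him : w.im = (b - 1 / 2) * τ.im := by
        simp [hw]; ring
      have hre : w.re = a - 1 / 2 + (b - 1 / 2) * τ.re := by
        simp [hw]; ring
      refine mul_ne_zero (mul_ne_zero (mul_ne_zero hτ0 ?_) (mul_ne_zero ?_ ?_)) (Complex.exp_ne_zero _)
      · intro h0
        have h1 := mul_expQuot w
        rw [h0, mul_zero, eq_comm, sub_eq_zero, eq_comm] at h1
        obtain ⟨n, hn⟩ := (exp_two_pi_I_mul_eq_one_iff _).1 h1
        have i1 : (b - 1 / 2) * τ.im = 0 := by rw [← him, hn]; simp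
        have i2 : b - 1 / 2 = 0 := by simpa [hτ.ne'] using i1
        have i3 : (n : ℝ) = a - 1 / 2 := by
          rw [i2, zero_mul, add_zero] at hre
          rw [← hre, hn]; simp
        have i4 : n = 0 := by
          have l1 : (n : ℝ) < 1 := by linarith [ha.2]
          have l2 : (-1 : ℝ) < n := by linarith [ha.1]
          have l1' : n < 1 := by exact_mod_cast l1
          have l2' : -1 < n := by exact_mod_cast l2
          omega
        rw [hn, i4] at h0
        exact expQuot_zero_ne (by simpa using h0)
      · refine qPoch_ne_zero_of_im_pos hτ ?_
        rw [sub_im, him]; nlinarith [hb.2]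
      · refine qPoch_ne_zero_of_im_pos hτ ?_
        rw [add_im, him]; nlinarith [hb.1]) per₁ per₂
  -- the constant is found at `z = 0` from the transformation of the eta function
  have hC1 : C = 1 := by
    have h0 := hC 0
    have hT : qPoch τ τ ≠ 0 := qPoch_ne_zero_of_im_pos hτ hτ
    simp only [hN, hD, ht, zero_div, sub_zero, zero_add] at h0
    have h1 := qPoch_self_modular hτ
    have h2 : I * (qPoch s s * qPoch s s) =
        exp (2 * Real.pi * I * ((τ + 1 / τ) / 24)) ^ 2 * τ * (qPoch τ τ * qPoch τ τ) := by
      rw [← hs] at h1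
      linear_combination (sqrt I * qPoch s s + exp (2 * Real.pi * I * ((τ + 1 / τ) / 24)) * sqrt τ * qPoch τ τ) * h1
        - qPoch s s * qPoch s s * sqrt_sq' I_ne_zero
        + exp (2 * Real.pi * I * ((τ + 1 / τ) / 24)) ^ 2 * (qPoch τ τ * qPoch τ τ) * sqrt_sq' hτ0
    have e : exp (Real.pi * I * thetaB 0 τ) =
        exp (2 * Real.pi * I * ((τ + 1 / τ) / 24)) ^ 2 * (-I) := by
      rw [← Complex.exp_neg_pi_div_two_mul_I, ← Complex.exp_nat_mul, ← Complex.exp_add]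
      congr 1; unfold thetaB; push_cast; ring
    have hE := Complex.exp_ne_zero (2 * Real.pi * I * ((τ + 1 / τ) / 24))
    rw [e] at h0
    set E := exp (2 * Real.pi * I * ((τ + 1 / τ) / 24))
    have h3 : qPoch s s * qPoch s s = C * (τ * (qPoch τ τ * qPoch τ τ) * (E ^ 2 * (-I))) := by
      refine mul_left_cancel₀ expQuot_zero_ne ?_
      linear_combination h0
    rw [h3] at h2
    have h4 : (C - 1) * (E ^ 2 * τ * (qPoch τ τ * qPoch τ τ)) = 0 := by
      linear_combination h2 + C * τ * (qPoch τ τ * qPoch τ τ) * E ^ 2 * I_sq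
    rcases mul_eq_zero.1 h4 with h | h
    · exact sub_eq_zero.1 h
    · exact absurd h (mul_ne_zero (mul_ne_zero (pow_ne_zero _ hE) hτ0) (mul_ne_zero hT hT))
  refine mul_left_cancel₀ hτ0 ?_
  rw [← hzN, ← hzD, hC z, hC1, one_mul]

/-! ### The three-term relation -/

/-- The functional equation `N (z + ω) D z = N z D (z + ω)` for `N = L` and `D = e^Q R`, where the
quotients of `L` and of `R` under the shift by `ω` are `b / a` and `d / c`, and
`b c = E a d` with `E` the multiplier of `e^Q`. -/
lemma shift_eq_of_factors {L R e a b c d E : ℂ → ℂ} {ω z₀ : ℂ} (hL : Differentiable ℂ L)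
    (hR : Differentiable ℂ R) (he : Differentiable ℂ e) (ha : Differentiable ℂ fun z => d z * a z)
    (h0 : d z₀ * a z₀ ≠ 0) (h₁ : ∀ z, L (z + ω) * a z = L z * b z)
    (h₂ : ∀ z, R (z + ω) * c z = R z * d z) (h₃ : ∀ z, b z * c z = E z * (d z * a z))
    (h₄ : ∀ z, e (z + ω) = E z * e z) (z : ℂ) :
    L (z + ω) * (e z * R z) = L z * (e (z + ω) * R (z + ω)) := by
  have sh : Differentiable ℂ fun z : ℂ => z + ω := by fun_prop
  refine congrFun (eq_of_mul_left_entire (f := fun z => L (z + ω) * (e z * R z))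
    (g := fun z => L z * (e (z + ω) * R (z + ω))) (h := fun z => d z * a z)
    ((hL.comp sh).mul (he.mul hR)) (hL.mul ((he.comp sh).mul (hR.comp sh))) ha h0 fun w => ?_) z
  rw [h₄ w]
  linear_combination d w * e w * R w * h₁ w - L w * b w * e w * h₂ w
    + L w * e w * R (w + ω) * h₃ w

/-- The increment of `Q` under `z ↦ z + τ` is the exponent in the transformation of `θ₀(z, σ)`. -/
lemma exp_modularQ_add_left (z : ℂ) {τ σ : ℂ} (hτ : τ ≠ 0) (hσ : σ ≠ 0) :
    exp (Real.pi * I * modularQ (z + τ) τ σ) =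
      exp (Real.pi * I * thetaB z σ) * exp (Real.pi * I * modularQ z τ σ) := by
  rw [← Complex.exp_add]
  congr 1; unfold modularQ thetaB; field_simp; ring

lemma modularQ_comm (z τ σ : ℂ) : modularQ z τ σ = modularQ z σ τ := by
  unfold modularQ; ring

lemma sqrt_I_eq_exp : sqrt I = exp (Real.pi * I / 4) := by
  rw [sqrt_eq_exp I_ne_zero, log_I]; congr 1; ring

/-- The three-term relation with the denominators cleared, so that it holds for every `z`. -/
theorem qPoch₂_three_term {τ σ : ℂ} (hτ : 0 < τ.im) (hσ : 0 < σ.im) (hστ : 0 < (σ / τ).im) (z : ℂ) :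
    qPoch₂ ((σ - 1 - z) / τ) (σ / τ) (-1 / τ) * qPoch₂ ((z - τ) / σ) (-τ / σ) (-1 / σ) *
        qPoch₂ z τ σ =
      exp (Real.pi * I * modularQ z τ σ) *
        (qPoch₂ ((-1 - z) / σ) (-τ / σ) (-1 / σ) * qPoch₂ (τ + σ - z) τ σ *
          qPoch₂ (z / τ) (σ / τ) (-1 / τ)) := by
  have hτ0 : τ ≠ 0 := fun h => by simp [h] at hτ
  have hσ0 : σ ≠ 0 := fun h => by simp [h] at hσ
  have huv : -τ / σ = -1 / (σ / τ) := by field_simp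
  have hs := neg_one_div_im_pos hτ
  have hr := neg_one_div_im_pos hσ
  have hu : 0 < (-τ / σ).im := by rw [huv]; exact neg_one_div_im_pos hστ
  set v := σ / τ with hv_def
  set s := -1 / τ with hs_def
  set u := -τ / σ with hu_def
  set r := -1 / σ with hr_def
  set L : ℂ → ℂ := fun z => qPoch₂ ((σ - 1 - z) / τ) v s * qPoch₂ ((z - τ) / σ) u r * qPoch₂ z τ σ
    with hL
  set R : ℂ → ℂ := fun z => qPoch₂ ((-1 - z) / σ) u r * qPoch₂ (τ + σ - z) τ σ * qPoch₂ (z / τ) v s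
    with hR
  set e : ℂ → ℂ := fun z => exp (Real.pi * I * modularQ z τ σ) with he
  have hLd : Differentiable ℂ L :=
    (((differentiable_qPoch₂ hστ hs).comp
        (by fun_prop : Differentiable ℂ fun z : ℂ => (σ - 1 - z) / τ)).mul
      ((differentiable_qPoch₂ hu hr).comp
        (by fun_prop : Differentiable ℂ fun z : ℂ => (z - τ) / σ))).mul (differentiable_qPoch₂ hτ hσ)
  have hRd : Differentiable ℂ R :=
    (((differentiable_qPoch₂ hu hr).comp
        (by fun_prop : Differentiable ℂ fun z : ℂ => (-1 - z) / σ)).mul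
      ((differentiable_qPoch₂ hτ hσ).comp
        (by fun_prop : Differentiable ℂ fun z : ℂ => τ + σ - z))).mul
      ((differentiable_qPoch₂ hστ hs).comp (by fun_prop : Differentiable ℂ fun z : ℂ => z / τ))
  have hed : Differentiable ℂ e := by
    simp only [he, modularQ]; fun_prop
  have hθ : ∀ {τ : ℂ}, 0 < τ.im → qPoch (τ - τ / 2) τ * qPoch (τ / 2) τ ≠ 0 := fun {τ} hτ =>
    mul_ne_zero (qPoch_ne_zero_of_im_pos hτ (by rw [sub_half]; simpa using hτ))
      (qPoch_ne_zero_of_im_pos hτ (by simpa using hτ))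
  have per₁ := shift_eq_of_factors (L := L) (R := R) (e := e) (ω := τ) (a := fun z => qPoch z σ)
    (b := fun z => qPoch (z / σ) r) (c := fun z => qPoch (r - z / σ) r)
    (d := fun z => qPoch (σ - z) σ) (E := fun z => exp (Real.pi * I * thetaB z σ))
    hLd hRd hed (differentiable_qTheta hσ) (hθ hσ)
    (fun z => by
      simp only [hL]
      rw [qPoch₂_eq_mul z hτ hσ, show (σ - 1 - (z + τ)) / τ = (σ - 1 - z) / τ - 1 by field_simp; ring,
        qPoch₂_sub_one, show (z + τ - τ) / σ = z / σ by ring, qPoch₂_eq_mul (z / σ) hu hr,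
        show z / σ + u = (z - τ) / σ by rw [hu_def]; ring]
      ring)
    (fun z => by
      simp only [hR]
      rw [show τ + σ - (z + τ) = σ - z by ring, qPoch₂_eq_mul (σ - z) hτ hσ,
        show σ - z + τ = τ + σ - z by ring, show r - z / σ = (-1 - z) / σ by rw [hr_def]; ring,
        qPoch₂_eq_mul ((-1 - z) / σ) hu hr,
        show (-1 - z) / σ + u = (-1 - (z + τ)) / σ by rw [hu_def]; ring,
        show (z + τ) / τ = z / τ + 1 by field_simp, qPoch₂_add_one]
      ring)
    (fun z => by
      have := qTheta_modular z hσ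
      unfold qTheta at this
      rw [← this]; ring)
    (fun z => exp_modularQ_add_left z hτ0 hσ0)
  have per₂ := shift_eq_of_factors (L := L) (R := R) (e := e) (ω := σ) (a := fun z => qPoch z τ)
    (b := fun z => qPoch (s - z / τ) s) (c := fun z => qPoch (z / τ) s)
    (d := fun z => qPoch (τ - z) τ) (E := fun z => exp (Real.pi * I * thetaB z τ))
    hLd hRd hed (differentiable_qTheta hτ) (hθ hτ)
    (fun z => by
      simp only [hL]
      rw [qPoch₂_eq_mul' z hτ hσ, show (σ - 1 - (z + σ)) / τ = s - z / τ by rw [hs_def]; ring,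
        qPoch₂_eq_mul (s - z / τ) hστ hs,
        show s - z / τ + v = (σ - 1 - z) / τ by rw [hs_def, hv_def]; ring,
        show (z + σ - τ) / σ = (z - τ) / σ + 1 by field_simp; ring, qPoch₂_add_one]
      ring)
    (fun z => by
      simp only [hR]
      rw [show τ + σ - (z + σ) = τ - z by ring, qPoch₂_eq_mul' (τ - z) hτ hσ,
        show τ - z + σ = τ + σ - z by ring,
        show (-1 - (z + σ)) / σ = (-1 - z) / σ - 1 by field_simp; ring, qPoch₂_sub_one,
        qPoch₂_eq_mul (z / τ) hστ hs, show z / τ + v = (z + σ) / τ by rw [hv_def]; ring]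
      ring)
    (fun z => by
      have := qTheta_modular z hτ
      unfold qTheta at this
      exact this)
    (fun z => by
      simp only [he]
      rw [modularQ_comm, exp_modularQ_add_left z hσ0 hτ0, modularQ_comm z σ])
  obtain ⟨C, hC⟩ := entire_quotient_const (ω₁ := τ) (ω₂ := σ) (z₀ := -1 / 2)
    (N := L) (D := fun z => e z * R z) hτ0 hστ.ne' hLd (hed.mul hRd) (by
      intro a b ha hb
      set w : ℂ := -1 / 2 + a * τ + b * σ with hw
      refine mul_ne_zero (Complex.exp_ne_zero _) (mul_ne_zero (mul_ne_zero ?_ ?_) ?_)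
      · refine qPoch₂_ne_zero_of_im_pos hu hr ?_
        have : (-1 - w) / σ = ((1 / 2 : ℝ) : ℂ) * r + a * u - b := by
          rw [hw, hr_def, hu_def]; push_cast; field_simp; ring
        rw [this, sub_im, add_im, im_ofReal_mul, im_ofReal_mul, ofReal_im]
        have := mul_nonneg ha.1 hu.le
        linarith
      · have hw' : τ + σ - w = ((1 / 2 : ℝ) : ℂ) + ((1 - a : ℝ) : ℂ) * τ + ((1 - b : ℝ) : ℂ) * σ := by
          rw [hw]; push_cast; ring
        have him : (τ + σ - w).im = (1 - a) * τ.im + (1 - b) * σ.im := by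
          rw [hw', add_im, add_im, im_ofReal_mul, im_ofReal_mul, ofReal_im, zero_add]
        have k1 : 0 ≤ (1 - a) * τ.im := mul_nonneg (by linarith [ha.2]) hτ.le
        have k2 : 0 ≤ (1 - b) * σ.im := mul_nonneg (by linarith [hb.2]) hσ.le
        refine qPoch₂_ne_zero_of_im_nonneg hτ hσ (by linarith) fun h0 n hn => ?_
        -- vanishing imaginary part forces `a = b = 1`, and then the argument is `1 / 2`
        have a1 : 1 - a = 0 := by
          have : (1 - a) * τ.im = 0 := by linarith
          simpa [hτ.ne'] using this
        have b1 : 1 - b = 0 := by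
          have : (1 - b) * σ.im = 0 := by linarith
          simpa [hσ.ne'] using this
        rw [hn, a1, b1] at hw'
        have h2 : (n : ℝ) = 1 / 2 := by
          have := congrArg Complex.re hw'
          simpa using this
        have h3 : (2 * n : ℝ) = 1 := by linarith
        have h4 : 2 * n = 1 := by exact_mod_cast h3
        omega
      · refine qPoch₂_ne_zero_of_im_pos hστ hs ?_
        have : w / τ = ((1 / 2 : ℝ) : ℂ) * s + b * v + a := by
          rw [hw, hs_def, hv_def]; push_cast; field_simp; ring
        rw [this, add_im, add_im, im_ofReal_mul, im_ofReal_mul, ofReal_im]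
        have := mul_nonneg hb.1 hστ.le
        linarith) per₁ per₂
  -- at `z = σ` all double products cancel, and the constant reduces to values of the eta function
  have hC1 : C = 1 := by
    have h := hC σ
    have n1 : qPoch₂ (v + s) v s ≠ 0 := qPoch₂_ne_zero_of_im_pos hστ hs (by
      rw [add_im]; linarith)
    have n2 : qPoch₂ (u + r) u r ≠ 0 := qPoch₂_ne_zero_of_im_pos hu hr (by rw [add_im]; linarith)
    have n3 : qPoch₂ (τ + σ) τ σ ≠ 0 := qPoch₂_ne_zero_of_im_pos hτ hσ (by rw [add_im]; linarith)
    simp only [hL, hR, he] at h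
    rw [show (σ - 1 - σ) / τ = s by rw [hs_def]; ring,
      show (σ - τ) / σ = u + 1 by rw [hu_def]; field_simp; ring, qPoch₂_add_one,
      show (-1 - σ) / σ = r - 1 by rw [hr_def]; field_simp, qPoch₂_sub_one,
      show τ + σ - σ = τ by ring, ← hv_def,
      qPoch₂_eq_mul s hστ hs, add_comm s v, qPoch₂_eq_mul' u hu hr, qPoch₂_eq_mul σ hτ hσ,
      add_comm σ τ, qPoch₂_eq_mul r hu hr, add_comm r u, qPoch₂_eq_mul' τ hτ hσ,
      qPoch₂_eq_mul' v hστ hs] at h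
    have h5 : qPoch s s * qPoch u u * qPoch σ σ = C * (exp (Real.pi * I * modularQ σ τ σ) *
        (qPoch r r * qPoch τ τ * qPoch v v)) := by
      refine mul_right_cancel₀ (mul_ne_zero (mul_ne_zero n1 n2) n3) ?_
      linear_combination h
    have mτ := qPoch_self_modular hτ
    have mσ := qPoch_self_modular hσ
    have mv := qPoch_self_modular hστ
    rw [← huv] at mv
    rw [← hs_def] at mτ
    rw [← hr_def] at mσ
    have hsq := sqrt_mul_sqrt_div hτ hσ
    rw [← hv_def] at hsq
    have hE : exp (2 * Real.pi * I * ((τ + 1 / τ) / 24)) * exp (2 * Real.pi * I * ((v + 1 / v) / 24)) =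
        sqrt I * exp (Real.pi * I * modularQ σ τ σ) * exp (2 * Real.pi * I * ((σ + 1 / σ) / 24)) := by
      rw [sqrt_I_eq_exp, ← Complex.exp_add, ← Complex.exp_add, ← Complex.exp_add]
      congr 1
      rw [hv_def]; unfold modularQ; field_simp; ring
    have pτ := qPoch_ne_zero_of_im_pos hτ hτ
    have pσ := qPoch_ne_zero_of_im_pos hσ hσ
    have pv := qPoch_ne_zero_of_im_pos hστ hστ
    have e1 := Complex.exp_ne_zero (2 * Real.pi * I * ((τ + 1 / τ) / 24))
    have e2 := Complex.exp_ne_zero (2 * Real.pi * I * ((v + 1 / v) / 24))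
    have hs0 : sqrt σ ≠ 0 := by rw [sqrt_eq_exp hσ0]; exact Complex.exp_ne_zero _
    generalize exp (2 * Real.pi * I * ((τ + 1 / τ) / 24)) = Eτ at *
    generalize exp (2 * Real.pi * I * ((σ + 1 / σ) / 24)) = Eσ at *
    generalize exp (2 * Real.pi * I * ((v + 1 / v) / 24)) = Ev at *
    generalize exp (Real.pi * I * modularQ σ τ σ) = EQ at *
    refine mul_right_cancel₀ (mul_ne_zero (mul_ne_zero (mul_ne_zero e1 e2) hs0)
      (mul_ne_zero (mul_ne_zero pτ pσ) pv)) ?_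
    have t1 : (sqrt I * qPoch s s) * (sqrt I * qPoch u u) * qPoch σ σ = C * (sqrt I * EQ *
        ((sqrt I * qPoch r r) * qPoch τ τ * qPoch v v)) := by
      linear_combination sqrt I * sqrt I * h5
    rw [mτ, mv, mσ] at t1
    linear_combination -t1 + C * sqrt σ * qPoch τ τ * qPoch σ σ * qPoch v v * hE +
      Eτ * Ev * qPoch τ τ * qPoch v v * qPoch σ σ * hsq
  have := hC z
  rw [hC1, one_mul] at this
  exact this

end Auxiliary

/-- The three-term modular relation for the elliptic gamma function under `SL₃(ℤ)`:
`Γ(z/τ, σ/τ, −1/τ) = e^{iπQ(z,τ,σ)} Γ((z−τ)/σ, −τ/σ, −1/σ) Γ(z,τ,σ)`. -/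
theorem ellGamma_modular_three_term (τ σ z : ℂ) (hτ : 0 < τ.im) (hσ : 0 < σ.im)
    (hστ : 0 < (σ / τ).im)
    (h1 : EllGammaRegular z τ σ)
    (h2 : EllGammaRegular (z / τ) (σ / τ) (-1 / τ))
    (h3 : EllGammaRegular ((z - τ) / σ) (-τ / σ) (-1 / σ)) :
    ellGamma (z / τ) (σ / τ) (-1 / τ) =
      Complex.exp (Real.pi * Complex.I * modularQ z τ σ) *
        ellGamma ((z - τ) / σ) (-τ / σ) (-1 / σ) * ellGamma z τ σ := by
  have hσ0 : σ ≠ 0 := fun h => by simp [h] at hσ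
  have hs := neg_one_div_im_pos hτ
  have hr := neg_one_div_im_pos hσ
  have hu : 0 < (-τ / σ).im := by
    rw [show -τ / σ = -1 / (σ / τ) by field_simp]; exact neg_one_div_im_pos hστ
  have h := qPoch₂_three_term hτ hσ hστ z
  have n1 := qPoch₂_ne_zero hτ hσ h1
  have n2 := qPoch₂_ne_zero hστ hs h2
  have n3 := qPoch₂_ne_zero hu hr h3
  rw [ellGamma_eq_div hτ hσ h1, ellGamma_eq_div hστ hs h2, ellGamma_eq_div hu hr h3,
    show σ / τ + -1 / τ - z / τ = (σ - 1 - z) / τ by ring,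
    show -τ / σ + -1 / σ - (z - τ) / σ = (-1 - z) / σ by ring, mul_assoc,
    div_mul_div_comm, mul_div_assoc', div_eq_div_iff n2 (mul_ne_zero n3 n1)]
  linear_combination h
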